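/- The empty pooling set (full separation) is optimal for u — that is, ∫_0^1 u(θ) dG_P(θ) ≤ ∫_0^1 u(θ) dF(θ) for every open pooling set P — if and only if u''(θ) ≥ 0 for almost all θ ∈ [0,1]. -/

import Mathlib

open MeasureTheory Set
open scoped Classical

noncomputable section

/-- CDF associated with the density `f` (relevant on `[0,1]`): `F(x) = ∫_0^x f`. -/
def cdfF (f : ℝ → ℝ) (x : ℝ) : ℝ := ∫ t in (0:ℝ)..x, f t

/-- Conditional mean `E_F[θ | (ξ,ζ)]` of `θ` on the interval `(ξ, ζ)` under density `f`. -/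
def condMean (f : ℝ → ℝ) (ξ ζ : ℝ) : ℝ :=
  (∫ t in ξ..ζ, t * f t) / (∫ t in ξ..ζ, f t)

/-- `f` is a strictly positive density of a probability measure on `[0,1]`. -/
def IsDensity (f : ℝ → ℝ) : Prop :=
  (∀ θ ∈ Icc (0:ℝ) 1, 0 < f θ) ∧ IntegrableOn f (Icc (0:ℝ) 1) ∧
    (∫ t in (0:ℝ)..1, f t) = 1

/-- An open pooling set: a relatively open subset of `[0,1]`. -/
def IsPoolingSet (P : Set ℝ) : Prop :=
  ∃ U : Set ℝ, IsOpen U ∧ P = U ∩ Icc (0:ℝ) 1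

/-- Left endpoint `ξ_i` of the interval component of `θ` in `P`. -/
def compInf (P : Set ℝ) (θ : ℝ) : ℝ := sInf (connectedComponentIn P θ)

/-- Right endpoint `ζ_i` of the interval component of `θ` in `P`. -/
def compSup (P : Set ℝ) (θ : ℝ) : ℝ := sSup (connectedComponentIn P θ)

/-- The posterior-mean map induced by the pooling set `P`: states in a pooled
interval are mapped to the conditional mean of that interval, other states to
themselves. -/
def poolMean (f : ℝ → ℝ) (P : Set ℝ) (θ : ℝ) : ℝ :=
  if θ ∈ P then condMean f (compInf P θ) (compSup P θ) else θ

/-- The induced distribution `G_P` of posterior means. -/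
def Gp (f : ℝ → ℝ) (P : Set ℝ) (θ : ℝ) : ℝ :=
  if θ ∈ P then
    (if θ < condMean f (compInf P θ) (compSup P θ) then cdfF f (compInf P θ)
     else cdfF f (compSup P θ))
  else cdfF f θ

/-- `Γ_P(θ) = ∫_0^θ G_P(t) dt`. -/
def Gam (f : ℝ → ℝ) (P : Set ℝ) (θ : ℝ) : ℝ := ∫ t in (0:ℝ)..θ, Gp f P t

/-- The value `∫_0^1 u(θ) dG_P(θ)` of the pooling set `P` under payoff `u`,
written as the expectation of `u` composed with the posterior-mean map. -/
def poolValue (f : ℝ → ℝ) (u : ℝ → ℝ) (P : Set ℝ) : ℝ :=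
  ∫ θ in (0:ℝ)..1, u (poolMean f P θ) * f θ

/-- `P` is an optimal pooling set for `u`. -/
def IsOptimal (f : ℝ → ℝ) (u : ℝ → ℝ) (P : Set ℝ) : Prop :=
  IsPoolingSet P ∧ ∀ Q : Set ℝ, IsPoolingSet Q → poolValue f u Q ≤ poolValue f u P

/-- `u` is continuously differentiable on `[0,1]` with derivative `u'`, and `u'`
is absolutely continuous with integrable a.e. derivative `u''` (encoded via the
fundamental theorem of calculus). -/
def C1AC (u u' u'' : ℝ → ℝ) : Prop :=
  (∀ θ ∈ Icc (0:ℝ) 1, HasDerivAt u (u' θ) θ) ∧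
  ContinuousOn u' (Icc (0:ℝ) 1) ∧
  IntegrableOn u'' (Icc (0:ℝ) 1) ∧
  (∀ θ ∈ Icc (0:ℝ) 1, u' θ = u' 0 + ∫ t in (0:ℝ)..θ, u'' t)

/-!
A payoff that is affine on an interval is indifferent to pooling it, because pooling preserves the
conditional mean. If `u` is convex, then it lies above its supporting line at the conditional mean
of each pooled interval, so no pooling gains. Conversely, suppose that no interval can be pooled
with a gain, and subtract from `u` a linear function so that the two ends of some chord have the
same height. If `u` rose above the chord, it would have a first interior maximiser `c`; by the
intermediate value theorem `c` is the conditional mean of some interval, and pooling that interval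
would strictly gain. Hence full separation is optimal exactly when `u` is convex. Convexity means
that `u'` is nondecreasing, and by Lebesgue's differentiation theorem this means `u'' ≥ 0` almost
everywhere.
-/

open scoped Topology

section Interval

variable {f u : ℝ → ℝ} {a b c : ℝ}

lemma intervalIntegrable_of_integrableOn_Icc {x y : ℝ} (hf : IntegrableOn f (Icc a b))
    (hx : x ∈ Icc a b) (hy : y ∈ Icc a b) : IntervalIntegrable f volume x y :=
  (hf.mono_set (uIcc_subset_Icc hx hy)).intervalIntegrable

lemma intervalIntegral_pos_of_pos_on_Ioo (hf : IntegrableOn f (Icc a b))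
    (hpos : ∀ t ∈ Ioo a b, 0 < f t) (hab : a < b) : 0 < ∫ t in a..b, f t :=
  intervalIntegral.intervalIntegral_pos_of_pos_on (intervalIntegrable_of_integrableOn_Icc hf
    (left_mem_Icc.2 hab.le) (right_mem_Icc.2 hab.le)) hpos hab

lemma integral_const_sub_mul (hf : IntegrableOn f (Icc a b)) (hab : a ≤ b)
    (hf₀ : ∫ t in a..b, f t ≠ 0) (c : ℝ) :
    ∫ t in a..b, (c - t) * f t = (c - condMean f a b) * ∫ t in a..b, f t := by
  have hfi := intervalIntegrable_of_integrableOn_Icc hf (left_mem_Icc.2 hab) (right_mem_Icc.2 hab)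
  simp_rw [sub_mul]
  rw [intervalIntegral.integral_sub (hfi.const_mul c)
      (hfi.continuousOn_mul (g := fun t => t) continuousOn_id),
    intervalIntegral.integral_const_mul, condMean, div_mul_cancel₀ _ hf₀]

lemma integral_condMean_sub_mul (hf : IntegrableOn f (Icc a b)) (hab : a ≤ b)
    (hf₀ : ∫ t in a..b, f t ≠ 0) : ∫ t in a..b, (condMean f a b - t) * f t = 0 := by
  rw [integral_const_sub_mul hf hab hf₀, sub_self, zero_mul]

lemma condMean_mem_Ioo (hf : IntegrableOn f (Icc a b)) (hpos : ∀ t ∈ Ioo a b, 0 < f t)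
    (hab : a < b) : condMean f a b ∈ Ioo a b := by
  have hf₀ := intervalIntegral_pos_of_pos_on_Ioo hf hpos hab
  have hint (c : ℝ) : IntegrableOn (fun t => (c - t) * f t) (Icc a b) :=
    hf.continuousOn_mul (by fun_prop) isCompact_Icc
  have hleft : 0 < ∫ t in a..b, -((a - t) * f t) :=
    intervalIntegral_pos_of_pos_on_Ioo (hint a).neg
      (fun t ht => neg_pos.2 (mul_neg_of_neg_of_pos (sub_neg.2 ht.1) (hpos t ht))) hab
  have hright : 0 < ∫ t in a..b, (b - t) * f t :=
    intervalIntegral_pos_of_pos_on_Ioo (hint b)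
      (fun t ht => mul_pos (sub_pos.2 ht.2) (hpos t ht)) hab
  rw [intervalIntegral.integral_neg, integral_const_sub_mul hf hab.le hf₀.ne', ← neg_mul,
    mul_pos_iff_of_pos_right hf₀, neg_sub, sub_pos] at hleft
  rw [integral_const_sub_mul hf hab.le hf₀.ne', mul_pos_iff_of_pos_right hf₀, sub_pos] at hright
  exact ⟨hleft, hright⟩

lemma exists_intervalIntegral_eq_zero (hf : IntegrableOn f (Icc a b)) (hc : c ∈ Icc a b)
    (hleft : 0 < ∫ t in a..c, f t) (hright : ∫ t in c..b, f t < 0) :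
    ∃ x ∈ Ico a c, ∃ y ∈ Ioc c b, ∫ t in x..y, f t = 0 := by
  have hL : ContinuousOn (fun x => ∫ t in x..c, f t) (Icc a c) := by
    have hac := hf.mono_set (Icc_subset_Icc_right hc.2)
    rw [← uIcc_of_le hc.1] at hac ⊢
    exact intervalIntegral.continuousOn_primitive_interval_left hac
  have hR : ContinuousOn (fun y => ∫ t in c..y, f t) (Icc c b) := by
    have hcb := hf.mono_set (Icc_subset_Icc_left hc.1)
    rw [← uIcc_of_le hc.2] at hcb ⊢
    exact intervalIntegral.continuousOn_primitive_interval hcb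
  obtain ⟨v, hv, hvL, hvR⟩ : ∃ v, 0 < v ∧ v ≤ ∫ t in a..c, f t ∧ ∫ t in c..b, f t ≤ -v :=
    ⟨min (∫ t in a..c, f t) (-∫ t in c..b, f t), lt_min hleft (neg_pos.2 hright),
      min_le_left _ _, le_neg_of_le_neg (min_le_right _ _)⟩
  obtain ⟨x, hx, hxv : ∫ t in x..c, f t = v⟩ := intermediate_value_Icc' hc.1 hL
    ⟨intervalIntegral.integral_same.trans_le hv.le, hvL⟩
  obtain ⟨y, hy, hyv : ∫ t in c..y, f t = -v⟩ := intermediate_value_Icc' hc.2 hR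
    ⟨hvR, (neg_neg_of_pos hv).le.trans_eq intervalIntegral.integral_same.symm⟩
  have hxc : x ≠ c := by
    rintro rfl
    exact hv.ne (intervalIntegral.integral_same.symm.trans hxv)
  have hcy : c ≠ y := by
    rintro rfl
    exact (neg_neg_of_pos hv).ne' (intervalIntegral.integral_same.symm.trans hyv)
  refine ⟨x, ⟨hx.1, hx.2.lt_of_ne hxc⟩, y, ⟨hy.1.lt_of_ne hcy, hy.2⟩, ?_⟩
  have hx' : x ∈ Icc a b := ⟨hx.1, hx.2.trans hc.2⟩
  have hy' : y ∈ Icc a b := ⟨hc.1.trans hy.1, hy.2⟩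
  rw [← intervalIntegral.integral_add_adjacent_intervals
    (intervalIntegrable_of_integrableOn_Icc hf hx' hc)
    (intervalIntegrable_of_integrableOn_Icc hf hc hy'), hxv, hyv, add_neg_cancel]

lemma exists_condMean_eq (hf : IntegrableOn f (Icc a b)) (hpos : ∀ t ∈ Ioo a b, 0 < f t)
    (hc : c ∈ Ioo a b) : ∃ x ∈ Ico a c, ∃ y ∈ Ioc c b, condMean f x y = c := by
  have hint : IntegrableOn (fun t => (c - t) * f t) (Icc a b) :=
    hf.continuousOn_mul (by fun_prop) isCompact_Icc
  have hleft : 0 < ∫ t in a..c, (c - t) * f t :=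
    intervalIntegral_pos_of_pos_on_Ioo (hint.mono_set (Icc_subset_Icc_right hc.2.le))
      (fun t ht => mul_pos (sub_pos.2 ht.2) (hpos t (Ioo_subset_Ioo_right hc.2.le ht))) hc.1
  have hright : 0 < ∫ t in c..b, -((c - t) * f t) :=
    intervalIntegral_pos_of_pos_on_Ioo (hint.mono_set (Icc_subset_Icc_left hc.1.le)).neg
      (fun t ht => neg_pos.2 (mul_neg_of_neg_of_pos (sub_neg.2 ht.1)
        (hpos t (Ioo_subset_Ioo_left hc.1.le ht)))) hc.2
  rw [intervalIntegral.integral_neg, neg_pos] at hright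
  obtain ⟨x, hx, y, hy, hzero⟩ :=
    exists_intervalIntegral_eq_zero hint (Ioo_subset_Icc_self hc) hleft hright
  have hxy : x < y := hx.2.trans hy.1
  have hfxy := hf.mono_set (Icc_subset_Icc hx.1 hy.2)
  have hf₀ := intervalIntegral_pos_of_pos_on_Ioo hfxy
    (fun t ht => hpos t (Ioo_subset_Ioo hx.1 hy.2 ht)) hxy
  rw [integral_const_sub_mul hfxy hxy.le hf₀.ne', mul_eq_zero, or_iff_left hf₀.ne',
    sub_eq_zero] at hzero
  exact ⟨x, hx, y, hy, hzero.symm⟩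

/-- The gain in expected payoff from pooling the states in `(a, b)`, compared with separating them:
`∫_a^b (u(E_F[θ|(a,b)]) - u(t)) dF(t)`. -/
def poolGain (f u : ℝ → ℝ) (a b : ℝ) : ℝ :=
  ∫ t in a..b, (u (condMean f a b) - u t) * f t

lemma poolGain_sub_const_mul (hf : IntegrableOn f (Icc a b)) (hab : a ≤ b)
    (hf₀ : ∫ t in a..b, f t ≠ 0) (hu : ContinuousOn u (Icc a b)) (k : ℝ) :
    poolGain f (fun t => u t - k * t) a b = poolGain f u a b := by
  have hfi := intervalIntegrable_of_integrableOn_Icc hf (left_mem_Icc.2 hab) (right_mem_Icc.2 hab)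
  set m := condMean f a b with hm
  calc poolGain f (fun t => u t - k * t) a b
      = ∫ t in a..b, ((u m - u t) * f t - k * ((m - t) * f t)) :=
        intervalIntegral.integral_congr fun t _ => by simp only [← hm]; ring
    _ = poolGain f u a b - k * ∫ t in a..b, (m - t) * f t := by
        rw [intervalIntegral.integral_sub, intervalIntegral.integral_const_mul, poolGain]
        · exact hfi.continuousOn_mul (continuousOn_const.sub (by rwa [uIcc_of_le hab]))
        · exact (hfi.continuousOn_mul (by fun_prop)).const_mul k
    _ = poolGain f u a b := by rw [integral_condMean_sub_mul hf hab hf₀, mul_zero, sub_zero]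

lemma exists_supporting_line {s : Set ℝ} {x : ℝ} (hu : ConvexOn ℝ s u) (hx : x ∈ interior s) :
    ∃ k, ∀ y ∈ s, u x + k * (y - x) ≤ u y := by
  refine ⟨derivWithin u (Ioi x) x, fun y hy => ?_⟩
  rcases lt_trichotomy x y with hxy | rfl | hyx
  · have hslope := hu.rightDeriv_le_slope_of_mem_interior hx hy hxy
    rw [slope_def_field, le_div_iff₀ (sub_pos.2 hxy)] at hslope
    linarith
  · simp
  · have hslope := (hu.slope_le_leftDeriv_of_mem_interior hy hx hyx).trans
      (hu.leftDeriv_le_rightDeriv_of_mem_interior hx)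
    rw [slope_def_field, div_le_iff₀ (sub_pos.2 hyx)] at hslope
    linarith

lemma poolGain_nonpos_of_convexOn (hf : IntegrableOn f (Icc a b)) (hpos : ∀ t ∈ Ioo a b, 0 < f t)
    (hab : a < b) (hu : ContinuousOn u (Icc a b)) (hconv : ConvexOn ℝ (Icc a b) u) :
    poolGain f u a b ≤ 0 := by
  have hf₀ := intervalIntegral_pos_of_pos_on_Ioo hf hpos hab
  have hfi := intervalIntegrable_of_integrableOn_Icc hf (left_mem_Icc.2 hab.le)
    (right_mem_Icc.2 hab.le)
  have hm : condMean f a b ∈ interior (Icc a b) := by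
    rw [interior_Icc]
    exact condMean_mem_Ioo hf hpos hab
  obtain ⟨k, hk⟩ := exists_supporting_line hconv hm
  calc poolGain f u a b
      ≤ ∫ t in a..b, k * ((condMean f a b - t) * f t) := by
        refine intervalIntegral.integral_mono_on_of_le_Ioo hab.le
          (hfi.continuousOn_mul (continuousOn_const.sub (by rwa [uIcc_of_le hab.le])))
          ((hfi.continuousOn_mul (by fun_prop)).const_mul k) fun t ht => ?_
        rw [← mul_assoc]
        exact mul_le_mul_of_nonneg_right (by linarith [hk t (Ioo_subset_Icc_self ht)])
          (hpos t ht).le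
    _ = 0 := by
        rw [intervalIntegral.integral_const_mul, integral_condMean_sub_mul hf hab.le hf₀.ne',
          mul_zero]

lemma exists_first_isMaxOn_Icc (hab : a ≤ b) (hu : ContinuousOn u (Icc a b)) :
    ∃ c ∈ Icc a b, IsMaxOn u (Icc a b) c ∧ ∀ t ∈ Ico a c, u t < u c := by
  obtain ⟨m, hm, hmax⟩ := isCompact_Icc.exists_isMaxOn (nonempty_Icc.2 hab) hu
  have hcompact : IsCompact (Icc a b ∩ u ⁻¹' {u m}) :=
    isCompact_Icc.of_isClosed_subset
      (hu.preimage_isClosed_of_isClosed isClosed_Icc isClosed_singleton) inter_subset_left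
  obtain ⟨c, ⟨hc, hcm : u c = u m⟩, hleast⟩ := hcompact.exists_isLeast ⟨m, hm, rfl⟩
  refine ⟨c, hc, fun t ht => (hmax ht).trans_eq hcm.symm, fun t ht => ?_⟩
  have ht' : t ∈ Icc a b := ⟨ht.1, ht.2.le.trans hc.2⟩
  exact hcm ▸ (hmax ht').lt_of_ne fun h => ht.2.not_ge (hleast ⟨ht', h⟩)

lemma poolGain_pos (hf : IntegrableOn f (Icc a b)) (hpos : ∀ t ∈ Ioo a b, 0 < f t) (hab : a < b)
    (hu : ContinuousOn u (Icc a b)) (hle : ∀ t ∈ Icc a b, u t ≤ u (condMean f a b))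
    (hlt : ∀ t ∈ Ioo a (condMean f a b), u t < u (condMean f a b)) : 0 < poolGain f u a b := by
  have hm := condMean_mem_Ioo hf hpos hab
  have hm' := Ioo_subset_Icc_self hm
  have hint : IntegrableOn (fun t => (u (condMean f a b) - u t) * f t) (Icc a b) :=
    hf.continuousOn_mul (continuousOn_const.sub hu) isCompact_Icc
  have hleft : 0 < ∫ t in a..condMean f a b, (u (condMean f a b) - u t) * f t :=
    intervalIntegral_pos_of_pos_on_Ioo (hint.mono_set (Icc_subset_Icc_right hm.2.le))
      (fun t ht => mul_pos (sub_pos.2 (hlt t ht)) (hpos t (Ioo_subset_Ioo_right hm.2.le ht))) hm.1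
  have hright : 0 ≤ ∫ t in condMean f a b..b, (u (condMean f a b) - u t) * f t := by
    rw [intervalIntegral.integral_of_le hm.2.le, integral_Ioc_eq_integral_Ioo]
    refine setIntegral_nonneg measurableSet_Ioo fun t ht => ?_
    have ht' := Ioo_subset_Ioo_left hm.1.le ht
    exact mul_nonneg (sub_nonneg.2 (hle t (Ioo_subset_Icc_self ht'))) (hpos t ht').le
  rw [poolGain, ← intervalIntegral.integral_add_adjacent_intervals
    (intervalIntegrable_of_integrableOn_Icc hint (left_mem_Icc.2 hab.le) hm')
    (intervalIntegrable_of_integrableOn_Icc hint hm' (right_mem_Icc.2 hab.le))]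
  exact add_pos_of_pos_of_nonneg hleft hright

-- Otherwise `u` has an interior maximum, and pooling an interval whose mean is the first
-- maximiser is strictly profitable.
lemma le_max_of_poolGain_nonpos (hf : IntegrableOn f (Icc a b)) (hpos : ∀ t ∈ Ioo a b, 0 < f t)
    (hu : ContinuousOn u (Icc a b))
    (hgain : ∀ x y, a ≤ x → x < y → y ≤ b → poolGain f u x y ≤ 0) {z : ℝ} (hz : z ∈ Icc a b) :
    u z ≤ max (u a) (u b) := by
  obtain ⟨c, hc, hmax, hfirst⟩ := exists_first_isMaxOn_Icc (hz.1.trans hz.2) hu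
  by_contra! hlt
  obtain ⟨hac, hbc⟩ := max_lt_iff.1 (hlt.trans_le (hmax hz))
  have hc' : c ∈ Ioo a b :=
    ⟨hc.1.lt_of_ne (ne_of_apply_ne u hac.ne), hc.2.lt_of_ne (ne_of_apply_ne u hbc.ne')⟩
  obtain ⟨x, hx, y, hy, hmean⟩ := exists_condMean_eq hf hpos hc'
  have hsub : Icc x y ⊆ Icc a b := Icc_subset_Icc hx.1 hy.2
  refine (hgain x y hx.1 (hx.2.trans hy.1) hy.2).not_gt <|
    poolGain_pos (hf.mono_set hsub) (fun t ht => hpos t (Ioo_subset_Ioo hx.1 hy.2 ht))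
      (hx.2.trans hy.1) (hu.mono hsub) ?_ ?_ <;> rw [hmean]
  · exact fun t ht => hmax (hsub ht)
  · exact fun t ht => hfirst t ⟨hx.1.trans ht.1.le, ht.2⟩

lemma convexOn_of_poolGain_nonpos (hf : IntegrableOn f (Icc a b)) (hpos : ∀ t ∈ Ioo a b, 0 < f t)
    (hu : ContinuousOn u (Icc a b))
    (hgain : ∀ x y, a ≤ x → x < y → y ≤ b → poolGain f u x y ≤ 0) :
    ConvexOn ℝ (Icc a b) u := by
  refine LinearOrder.convexOn_of_lt (convex_Icc a b) fun x hx y hy hxy p q hp hq hpq => ?_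
  have hsub : Icc x y ⊆ Icc a b := Icc_subset_Icc hx.1 hy.2
  have hfxy := hf.mono_set hsub
  have hz : p • x + q • y ∈ Icc x y := convex_Icc x y (left_mem_Icc.2 hxy.le)
    (right_mem_Icc.2 hxy.le) hp.le hq.le hpq
  obtain ⟨k, hk⟩ : ∃ k, u y - u x = k * (y - x) :=
    ⟨(u y - u x) / (y - x), (div_mul_cancel₀ _ (sub_pos.2 hxy).ne').symm⟩
  have hgain' : ∀ x' y', x ≤ x' → x' < y' → y' ≤ y →
      poolGain f (fun t => u t - k * t) x' y' ≤ 0 := by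
    intro x' y' hx' hxy' hy'
    have hsub' : Icc x' y' ⊆ Icc a b := Icc_subset_Icc (hx.1.trans hx') (hy'.trans hy.2)
    have hpos' := intervalIntegral_pos_of_pos_on_Ioo (hf.mono_set hsub')
      (fun t ht => hpos t (Ioo_subset_Ioo (hx.1.trans hx') (hy'.trans hy.2) ht)) hxy'
    rw [poolGain_sub_const_mul (hf.mono_set hsub') hxy'.le hpos'.ne' (hu.mono hsub')]
    exact hgain x' y' (hx.1.trans hx') hxy' (hy'.trans hy.2)
  have hchord := le_max_of_poolGain_nonpos (u := fun t => u t - k * t) hfxy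
    (fun t ht => hpos t (Ioo_subset_Ioo hx.1 hy.2 ht))
    ((hu.mono hsub).sub (by fun_prop)) hgain' hz
  have hends : u y - k * y = u x - k * x := by linarith
  rw [hends, max_self] at hchord
  simp only [smul_eq_mul] at hchord ⊢
  obtain rfl : p = 1 - q := by linarith
  linear_combination hchord - q * hends

end Interval

section PoolingSet

variable {f u : ℝ → ℝ} {P C : Set ℝ} {a b : ℝ}

lemma isPoolingSet_empty : IsPoolingSet ∅ := ⟨∅, isOpen_empty, (empty_inter _).symm⟩

lemma isPoolingSet_Ioo (ha : 0 ≤ a) (hb : b ≤ 1) : IsPoolingSet (Ioo a b) :=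
  ⟨Ioo a b, isOpen_Ioo,
    (inter_eq_left.2 (Ioo_subset_Icc_self.trans (Icc_subset_Icc ha hb))).symm⟩

namespace IsPoolingSet

lemma subset_Icc (hP : IsPoolingSet P) : P ⊆ Icc 0 1 := by
  obtain ⟨U, -, rfl⟩ := hP
  exact inter_subset_right

lemma measurableSet (hP : IsPoolingSet P) : MeasurableSet P := by
  obtain ⟨U, hU, rfl⟩ := hP
  exact hU.measurableSet.inter measurableSet_Icc

end IsPoolingSet

/-- The connected components of `P`: for a pooling set, the maximal intervals of states that are
pooled together. -/
def poolComponents (P : Set ℝ) : Set (Set ℝ) := connectedComponentIn P '' P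

lemma sUnion_poolComponents (P : Set ℝ) : ⋃₀ poolComponents P = P := by
  refine subset_antisymm (sUnion_subset ?_) fun θ hθ =>
    ⟨_, mem_image_of_mem _ hθ, mem_connectedComponentIn hθ⟩
  rintro _ ⟨θ, -, rfl⟩
  exact connectedComponentIn_subset P θ

lemma eq_connectedComponentIn_of_mem_poolComponents {θ : ℝ} (hC : C ∈ poolComponents P)
    (hθ : θ ∈ C) : connectedComponentIn P θ = C := by
  obtain ⟨x, -, rfl⟩ := hC
  exact (connectedComponentIn_eq hθ).symm

lemma pairwiseDisjoint_poolComponents (P : Set ℝ) : (poolComponents P).PairwiseDisjoint id := by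
  intro C hC D hD hCD
  refine disjoint_left.2 fun θ hθC hθD => hCD ?_
  rw [← eq_connectedComponentIn_of_mem_poolComponents hC hθC,
    eq_connectedComponentIn_of_mem_poolComponents hD hθD]

lemma isConnected_of_mem_poolComponents (hC : C ∈ poolComponents P) : IsConnected C := by
  obtain ⟨θ, hθ, rfl⟩ := hC
  exact isConnected_connectedComponentIn_iff.2 hθ

lemma measurableSet_of_mem_poolComponents (hC : C ∈ poolComponents P) : MeasurableSet C :=
  (isConnected_of_mem_poolComponents hC).isPreconnected.ordConnected.measurableSet

lemma connectedComponentIn_inter_mem_nhdsWithin {U s : Set ℝ} {x : ℝ} (hU : IsOpen U)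
    (hs : s.OrdConnected) (hx : x ∈ U ∩ s) : connectedComponentIn (U ∩ s) x ∈ 𝓝[s] x := by
  obtain ⟨ε, hε, hball⟩ := Metric.isOpen_iff.1 hU x hx.1
  rw [Real.ball_eq_Ioo] at hball
  have hxI : x ∈ Ioo (x - ε) (x + ε) := ⟨sub_lt_self x hε, lt_add_of_pos_right x hε⟩
  have hsub : Ioo (x - ε) (x + ε) ∩ s ⊆ connectedComponentIn (U ∩ s) x :=
    (ordConnected_Ioo.inter hs).isPreconnected.subset_connectedComponentIn ⟨hxI, hx.2⟩
      (inter_subset_inter_left s hball)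
  exact Filter.mem_of_superset
    (Filter.inter_mem (mem_nhdsWithin_of_mem_nhds (Ioo_mem_nhds hxI.1 hxI.2)) self_mem_nhdsWithin)
    hsub

namespace IsPoolingSet

lemma component_subset_Icc (hP : IsPoolingSet P) (hC : C ∈ poolComponents P) : C ⊆ Icc 0 1 :=
  ((subset_sUnion_of_mem hC).trans_eq (sUnion_poolComponents P)).trans hP.subset_Icc

lemma Icc_csInf_csSup_subset (hP : IsPoolingSet P) (hC : C ∈ poolComponents P) :
    Icc (sInf C) (sSup C) ⊆ Icc 0 1 := by
  have hne := (isConnected_of_mem_poolComponents hC).nonempty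
  exact Icc_subset_Icc (le_csInf hne fun x hx => (hP.component_subset_Icc hC hx).1)
    (csSup_le hne fun x hx => (hP.component_subset_Icc hC hx).2)

lemma Ioo_csInf_csSup_subset (hP : IsPoolingSet P) (hC : C ∈ poolComponents P) :
    Ioo (sInf C) (sSup C) ⊆ C :=
  (isConnected_of_mem_poolComponents hC).Ioo_csInf_csSup_subset
    (bddBelow_Icc.mono (hP.component_subset_Icc hC))
    (bddAbove_Icc.mono (hP.component_subset_Icc hC))

lemma component_subset_Icc_csInf_csSup (hP : IsPoolingSet P) (hC : C ∈ poolComponents P) :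
    C ⊆ Icc (sInf C) (sSup C) :=
  subset_Icc_csInf_csSup (bddBelow_Icc.mono (hP.component_subset_Icc hC))
    (bddAbove_Icc.mono (hP.component_subset_Icc hC))

lemma csInf_lt_csSup (hP : IsPoolingSet P) (hC : C ∈ poolComponents P) : sInf C < sSup C := by
  have hsub := hP.component_subset_Icc_csInf_csSup hC
  obtain ⟨U, hU, rfl⟩ := hP
  obtain ⟨θ, hθ, rfl⟩ := hC
  have hacc : AccPt θ (Filter.principal (Icc 0 1)) := (uniqueDiffOn_Icc_zero_one θ hθ.2).accPt
  obtain ⟨y, ⟨hy, hyθ⟩⟩ := (accPt_principal_iff_nhdsWithin.1 hacc).nonempty_of_mem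
    (Filter.inter_mem (nhdsWithin_mono θ sdiff_subset
      (connectedComponentIn_inter_mem_nhdsWithin hU ordConnected_Icc hθ)) self_mem_nhdsWithin)
  have hθ' := hsub (mem_connectedComponentIn hθ)
  have hy' := hsub hy
  rcases lt_or_gt_of_ne hyθ.2 with h | h
  · exact hy'.1.trans_lt (h.trans_le hθ'.2)
  · exact hθ'.1.trans_lt (h.trans_le hy'.2)

lemma component_ae_eq_Ioc (hP : IsPoolingSet P) (hC : C ∈ poolComponents P) :
    C =ᵐ[volume] Ioc (sInf C) (sSup C) :=
  ((hP.component_subset_Icc_csInf_csSup hC).eventuallyLE.trans Ioc_ae_eq_Icc.symm.le).antisymm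
    (Ioo_ae_eq_Ioc.symm.le.trans (hP.Ioo_csInf_csSup_subset hC).eventuallyLE)

lemma countable_poolComponents (hP : IsPoolingSet P) : (poolComponents P).Countable :=
  (pairwiseDisjoint_poolComponents P).countable_of_nonempty_interior fun _ hC =>
    (nonempty_Ioo.2 (hP.csInf_lt_csSup hC)).mono
      (interior_maximal (hP.Ioo_csInf_csSup_subset hC) isOpen_Ioo)

end IsPoolingSet

lemma poolMean_of_mem_poolComponents {θ : ℝ} (hC : C ∈ poolComponents P) (hθ : θ ∈ C) :
    poolMean f P θ = condMean f (sInf C) (sSup C) := by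
  have hθP : θ ∈ P := sUnion_poolComponents P ▸ mem_sUnion_of_mem hθ hC
  rw [poolMean, if_pos hθP, compInf, compSup, eq_connectedComponentIn_of_mem_poolComponents hC hθ]

lemma poolMean_of_notMem {θ : ℝ} (hθ : θ ∉ P) : poolMean f P θ = θ := if_neg hθ

lemma IsPoolingSet.poolMean_mem_Icc (hf : IsDensity f) (hP : IsPoolingSet P) {θ : ℝ}
    (hθ : θ ∈ Icc (0 : ℝ) 1) : poolMean f P θ ∈ Icc (0 : ℝ) 1 := by
  by_cases hθP : θ ∈ P
  · obtain ⟨C, hC, hθC⟩ := mem_sUnion.1 ((sUnion_poolComponents P).symm ▸ hθP)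
    have hsub := hP.Icc_csInf_csSup_subset hC
    rw [poolMean_of_mem_poolComponents hC hθC]
    exact hsub (Ioo_subset_Icc_self (condMean_mem_Ioo (hf.2.1.mono_set hsub)
      (fun t ht => hf.1 t (hsub (Ioo_subset_Icc_self ht))) (hP.csInf_lt_csSup hC)))
  · rwa [poolMean_of_notMem hθP]

lemma IsPoolingSet.aestronglyMeasurable_comp_poolMean (hP : IsPoolingSet P)
    (hu : ContinuousOn u (Icc 0 1)) :
    AEStronglyMeasurable (fun θ => u (poolMean f P θ)) (volume.restrict (Icc 0 1)) := by
  have : Countable (poolComponents P) := hP.countable_poolComponents.to_subtype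
  have hpool : AEStronglyMeasurable (fun θ => u (poolMean f P θ)) (volume.restrict P) := by
    nth_rw 2 [← sUnion_poolComponents P]
    rw [sUnion_eq_iUnion, aestronglyMeasurable_iUnion_iff]
    rintro ⟨C, hC⟩
    refine (aestronglyMeasurable_const (b := u (condMean f (sInf C) (sSup C)))).congr ?_
    filter_upwards [ae_restrict_mem (measurableSet_of_mem_poolComponents hC)] with θ hθ
    rw [poolMean_of_mem_poolComponents hC hθ]
  have hsep : AEStronglyMeasurable (fun θ => u (poolMean f P θ))
      (volume.restrict (Icc 0 1 \ P)) := by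
    have hmeas : MeasurableSet (Icc 0 1 \ P) := measurableSet_Icc.diff hP.measurableSet
    refine ((hu.mono sdiff_subset).aestronglyMeasurable hmeas).congr ?_
    filter_upwards [ae_restrict_mem hmeas] with θ hθ
    rw [poolMean_of_notMem hθ.2]
  rw [← union_sdiff_cancel hP.subset_Icc]
  exact aestronglyMeasurable_union_iff.2 ⟨hpool, hsep⟩

lemma IsPoolingSet.integrableOn_comp_poolMean_mul (hf : IsDensity f) (hP : IsPoolingSet P)
    (hu : ContinuousOn u (Icc 0 1)) :
    IntegrableOn (fun θ => u (poolMean f P θ) * f θ) (Icc 0 1) := by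
  obtain ⟨M, hM⟩ := isCompact_Icc.exists_bound_of_continuousOn hu
  exact hf.2.1.bdd_mul (hP.aestronglyMeasurable_comp_poolMean hu)
    (ae_restrict_of_forall_mem measurableSet_Icc fun θ hθ => hM _ (hP.poolMean_mem_Icc hf hθ))

lemma IsPoolingSet.integrableOn_poolMean_sub_mul (hf : IsDensity f) (hP : IsPoolingSet P)
    (hu : ContinuousOn u (Icc 0 1)) :
    IntegrableOn (fun θ => (u (poolMean f P θ) - u θ) * f θ) (Icc 0 1) := by
  simp_rw [sub_mul]
  exact (hP.integrableOn_comp_poolMean_mul hf hu).sub (hf.2.1.continuousOn_mul hu isCompact_Icc)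

lemma IsPoolingSet.poolValue_sub_poolValue_empty (hf : IsDensity f) (hP : IsPoolingSet P)
    (hu : ContinuousOn u (Icc 0 1)) :
    poolValue f u P - poolValue f u ∅ = ∫ θ in P, (u (poolMean f P θ) - u θ) * f θ := by
  have hint {g : ℝ → ℝ} (hg : IntegrableOn g (Icc 0 1)) : IntervalIntegrable g volume 0 1 :=
    intervalIntegrable_of_integrableOn_Icc hg (left_mem_Icc.2 zero_le_one)
      (right_mem_Icc.2 zero_le_one)
  calc poolValue f u P - poolValue f u ∅
      = ∫ θ in (0 : ℝ)..1, (u (poolMean f P θ) - u θ) * f θ := by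
        simp_rw [sub_mul]
        rw [intervalIntegral.integral_sub (hint (hP.integrableOn_comp_poolMean_mul hf hu))
          (hint (hf.2.1.continuousOn_mul hu isCompact_Icc))]
        simp only [poolValue, poolMean_of_notMem (notMem_empty _)]
    _ = ∫ θ in Icc (0 : ℝ) 1, (u (poolMean f P θ) - u θ) * f θ := by
        rw [intervalIntegral.integral_of_le zero_le_one, integral_Icc_eq_integral_Ioc]
    _ = ∫ θ in P, (u (poolMean f P θ) - u θ) * f θ :=
        setIntegral_eq_of_subset_of_forall_sdiff_eq_zero measurableSet_Icc hP.subset_Icc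
          fun θ hθ => by rw [poolMean_of_notMem hθ.2, sub_self, zero_mul]

lemma IsPoolingSet.setIntegral_component (hP : IsPoolingSet P) (hC : C ∈ poolComponents P) :
    ∫ θ in C, (u (poolMean f P θ) - u θ) * f θ = poolGain f u (sInf C) (sSup C) := by
  rw [setIntegral_congr_fun (measurableSet_of_mem_poolComponents hC) fun θ hθ => by
      rw [poolMean_of_mem_poolComponents hC hθ],
    setIntegral_congr_set (hP.component_ae_eq_Ioc hC), poolGain,
    intervalIntegral.integral_of_le (hP.csInf_lt_csSup hC).le]

lemma IsPoolingSet.poolValue_eq_add_tsum_poolGain (hf : IsDensity f) (hP : IsPoolingSet P)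
    (hu : ContinuousOn u (Icc 0 1)) :
    poolValue f u P =
      poolValue f u ∅ + ∑' C : poolComponents P, poolGain f u (sInf C) (sSup C) := by
  have : Countable (poolComponents P) := hP.countable_poolComponents.to_subtype
  have hunion : ⋃ C : poolComponents P, (C : Set ℝ) = P := by
    rw [← sUnion_eq_iUnion, sUnion_poolComponents]
  have hint : IntegrableOn (fun θ => (u (poolMean f P θ) - u θ) * f θ)
      (⋃ C : poolComponents P, (C : Set ℝ)) :=
    (hP.integrableOn_poolMean_sub_mul hf hu).mono_set (hunion.trans_subset hP.subset_Icc)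
  calc poolValue f u P
      = poolValue f u ∅ + ∫ θ in P, (u (poolMean f P θ) - u θ) * f θ := by
        rw [← hP.poolValue_sub_poolValue_empty hf hu, add_sub_cancel]
    _ = poolValue f u ∅ + ∫ θ in ⋃ C : poolComponents P, (C : Set ℝ),
          (u (poolMean f P θ) - u θ) * f θ := by rw [hunion]
    _ = poolValue f u ∅ + ∑' C : poolComponents P, ∫ θ in (C : Set ℝ),
          (u (poolMean f P θ) - u θ) * f θ := by
        rw [integral_iUnion (fun C => measurableSet_of_mem_poolComponents C.2)
          ((pairwise_subtype_iff_pairwise_set ..).2 (pairwiseDisjoint_poolComponents P)) hint]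
    _ = poolValue f u ∅ + ∑' C : poolComponents P, poolGain f u (sInf C) (sSup C) := by
        rw [tsum_congr fun C : poolComponents P => hP.setIntegral_component C.2]

lemma poolComponents_Ioo (hab : a < b) : poolComponents (Ioo a b) = {Ioo a b} := by
  rw [poolComponents, image_congr fun x hx => isPreconnected_Ioo.connectedComponentIn hx,
    (nonempty_Ioo.2 hab).image_const]

lemma poolValue_Ioo (hf : IsDensity f) (hu : ContinuousOn u (Icc 0 1)) (ha : 0 ≤ a) (hab : a < b)
    (hb : b ≤ 1) : poolValue f u (Ioo a b) = poolValue f u ∅ + poolGain f u a b := by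
  rw [(isPoolingSet_Ioo ha hb).poolValue_eq_add_tsum_poolGain hf hu, poolComponents_Ioo hab,
    tsum_singleton (Ioo a b) fun C => poolGain f u (sInf C) (sSup C), csInf_Ioo hab, csSup_Ioo hab]

theorem isOptimal_empty_iff_convexOn (hf : IsDensity f) (hu : ContinuousOn u (Icc 0 1)) :
    IsOptimal f u ∅ ↔ ConvexOn ℝ (Icc 0 1) u := by
  constructor
  · rintro ⟨-, hopt⟩
    refine convexOn_of_poolGain_nonpos hf.2.1 (fun t ht => hf.1 t (Ioo_subset_Icc_self ht)) hu
      fun x y hx hxy hy => ?_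
    have hle := hopt _ (isPoolingSet_Ioo hx hy)
    rwa [poolValue_Ioo hf hu hx hxy hy, add_le_iff_nonpos_right] at hle
  · refine fun hconv => ⟨isPoolingSet_empty, fun P hP => ?_⟩
    rw [hP.poolValue_eq_add_tsum_poolGain hf hu, add_le_iff_nonpos_right]
    refine tsum_nonpos fun C => ?_
    have hsub := hP.Icc_csInf_csSup_subset C.2
    exact poolGain_nonpos_of_convexOn (hf.2.1.mono_set hsub)
      (fun t ht => hf.1 t (hsub (Ioo_subset_Icc_self ht))) (hP.csInf_lt_csSup C.2) (hu.mono hsub)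
      (hconv.subset hsub (convex_Icc _ _))

end PoolingSet

section SecondDerivative

variable {u u' g : ℝ → ℝ} {a b : ℝ}

lemma convexOn_iff_monotoneOn_of_hasDerivAt {s : Set ℝ} (hs : Convex ℝ s)
    (hu : ∀ x ∈ s, HasDerivAt u (u' x) x) : ConvexOn ℝ s u ↔ MonotoneOn u' s := by
  have hderiv : EqOn (deriv u) u' s := fun x hx => (hu x hx).deriv
  constructor
  · exact fun hconv =>
      (hconv.monotoneOn_deriv fun x hx => (hu x hx).differentiableAt).congr hderiv
  · exact fun hmono => (hmono.congr hderiv.symm |>.mono interior_subset).convexOn_of_deriv hs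
      (fun x hx => (hu x hx).continuousAt.continuousWithinAt)
      fun x hx => (hu x (interior_subset hx)).differentiableAt.differentiableWithinAt

lemma monotoneOn_integral_iff_ae_nonneg (hg : IntegrableOn g (Icc a b)) :
    MonotoneOn (fun x => ∫ t in a..x, g t) (Icc a b) ↔
      ∀ᵐ x ∂volume.restrict (Icc a b), 0 ≤ g x := by
  constructor
  · intro hmono
    rw [← Measure.restrict_congr_set Ioo_ae_eq_Icc, ae_restrict_iff' measurableSet_Ioo]
    rcases lt_or_ge a b with hab | hba
    · have hgi := intervalIntegrable_of_integrableOn_Icc hg (left_mem_Icc.2 hab.le)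
        (right_mem_Icc.2 hab.le)
      filter_upwards [hgi.ae_hasDerivAt_integral] with x hderiv hx
      rw [uIcc_of_le hab.le] at hderiv
      exact (hderiv (Ioo_subset_Icc_self hx) a (left_mem_Icc.2 hab.le)).hasDerivWithinAt
        |>.nonneg_of_monotoneOn (uniqueDiffOn_Icc hab x (Ioo_subset_Icc_self hx)).accPt hmono
    · simp [Ioo_eq_empty_of_le hba]
  · intro hnonneg x hx y hy hxy
    have ha : a ∈ Icc a b := left_mem_Icc.2 (hx.1.trans hx.2)
    have hadd := intervalIntegral.integral_add_adjacent_intervals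
      (intervalIntegrable_of_integrableOn_Icc hg ha hx)
      (intervalIntegrable_of_integrableOn_Icc hg hx hy)
    have hxy₀ : 0 ≤ ∫ t in x..y, g t :=
      intervalIntegral.integral_nonneg_of_ae_restrict hxy
        (ae_restrict_of_ae_restrict_of_subset (Icc_subset_Icc hx.1 hy.2) hnonneg)
    exact (le_add_of_nonneg_right hxy₀).trans_eq hadd

lemma C1AC.convexOn_iff_ae_nonneg {u'' : ℝ → ℝ} (hu : C1AC u u' u'') :
    ConvexOn ℝ (Icc 0 1) u ↔ ∀ᵐ θ ∂volume.restrict (Icc (0 : ℝ) 1), 0 ≤ u'' θ := by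
  obtain ⟨hderiv, -, hint, hftc⟩ := hu
  rw [convexOn_iff_monotoneOn_of_hasDerivAt (convex_Icc 0 1) hderiv,
    ← monotoneOn_integral_iff_ae_nonneg hint]
  refine forall₂_congr fun x hx => forall₂_congr fun y hy => forall_congr' fun _ => ?_
  rw [hftc x hx, hftc y hy, add_le_add_iff_left]

end SecondDerivative

theorem separation_optimal_iff_general (f : ℝ → ℝ) (hf : IsDensity f) (u u' u'' : ℝ → ℝ)
    (hu : C1AC u u' u'') :
    IsOptimal f u ∅ ↔ ∀ᵐ θ ∂volume.restrict (Icc (0 : ℝ) 1), 0 ≤ u'' θ := by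
  have hcont : ContinuousOn u (Icc 0 1) := fun x hx =>
    (hu.1 x hx).continuousAt.continuousWithinAt
  exact (isOptimal_empty_iff_convexOn hf hcont).trans hu.convexOn_iff_ae_nonneg

/-- full separation (the empty pooling set) is optimal for `u` iff
`u''(θ) ≥ 0` for almost all `θ ∈ [0,1]`. Here `u''` is assumed to agree a.e.
with a function continuous at all but finitely many points of `[0,1]`. -/
theorem separation_optimal_iff (f : ℝ → ℝ) (hf : IsDensity f)
    (u u' u'' : ℝ → ℝ) (hu : C1AC u u' u'')
    (hreg : ∃ g : ℝ → ℝ, u'' =ᵐ[volume.restrict (Icc (0:ℝ) 1)] g ∧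
      ∃ s : Set ℝ, s.Finite ∧ ∀ θ ∈ Icc (0:ℝ) 1, θ ∉ s →
        ContinuousWithinAt g (Icc (0:ℝ) 1) θ) :
    IsOptimal f u (∅ : Set ℝ) ↔
      ∀ᵐ θ ∂(volume.restrict (Icc (0:ℝ) 1)), 0 ≤ u'' θ :=
  separation_optimal_iff_general f hf u u' u'' hu
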